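/- In characteristic zero, let k ⊆ K be a field extension and z ∈ K. Then z is algebraic over k if and only if the image dz of z in the K-vector space of Kähler differentials Ω_{K/k} is zero (assuming K is finitely generated over k). -/

import Mathlib

/-!
If `p ≠ 0` annihilates `z`, then `0 = d (p z) = p' z • dz`; in characteristic zero `p'` is nonzero
of smaller degree, so descending on the degree gives `dz = 0`.

Conversely, a field `K` of characteristic zero is formally smooth over each of its subrings, being
separable algebraic over a purely transcendental extension of the fraction field. Hence, for
algebraically independent elements `x i`, the map `K ⊗ Ω[R[x]⁄R] → Ω[K⁄R]` is injective, and it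
sends a basis to the differentials `d (x i)`. In particular `dz ≠ 0` when `z` is transcendental.
-/

open KaehlerDifferential Polynomial

theorem derivation_eq_zero_of_isAlgebraic {R A M : Type*} [CommRing R] [CommRing A] [IsDomain A]
    [CharZero A] [Algebra R A] [FaithfulSMul R A] [AddCommGroup M] [Module R M] [Module A M]
    [Module.IsTorsionFree A M] (d : Derivation R A M) {x : A} (hx : IsAlgebraic R x) :
    d x = 0 := by
  have := (FaithfulSMul.algebraMap_injective R A).isDomain
  have : CharZero R := (algebraMap R A).charZero
  obtain ⟨p, hp, hpx⟩ := hx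
  induction hn : p.natDegree using Nat.strong_induction_on generalizing p with
  | h n ih =>
    have hp_pos : 0 < p.natDegree := natDegree_pos_of_aeval_root hp hpx
      ((injective_iff_map_eq_zero _).mp (FaithfulSMul.algebraMap_injective R A))
    have hderiv : aeval x (derivative p) • d x = 0 := by
      rw [← d.map_aeval, hpx, map_zero]
    rcases smul_eq_zero.mp hderiv with hroot | hdx
    · exact ih _ (hn ▸ natDegree_derivative_lt hp_pos.ne') (derivative p)
        (fun h ↦ hp_pos.ne' (derivative_eq_zero.mp h)) hroot rfl
    · exact hdx

theorem formallySmooth_field_of_charZero (F K : Type*) [Field F] [Field K] [Algebra F K]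
    [CharZero F] : Algebra.FormallySmooth F K := by
  obtain ⟨ι, x, hx⟩ := exists_isTranscendenceBasis' F K
  have := hx.isAlgebraic_field
  exact .of_algebraicIndependent_of_isSeparable hx.1

theorem formallySmooth_of_faithfulSMul_of_charZero (R K : Type*) [CommRing R] [Field K]
    [Algebra R K] [FaithfulSMul R K] [CharZero K] : Algebra.FormallySmooth R K := by
  have := (FaithfulSMul.algebraMap_injective R K).isDomain
  let := FractionRing.liftAlgebra R K
  have : CharZero (FractionRing R) := (algebraMap (FractionRing R) K).charZero
  have : Algebra.FormallySmooth R (FractionRing R) := .of_isLocalization (nonZeroDivisors R)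
  have := formallySmooth_field_of_charZero (FractionRing R) K
  exact .comp R (FractionRing R) K

theorem mapBaseChange_injective_of_formallySmooth (R S T : Type*) [CommRing R] [CommRing S]
    [CommRing T] [Algebra R S] [Algebra R T] [Algebra S T] [IsScalarTower R S T]
    [Algebra.FormallySmooth S T] : Function.Injective (mapBaseChange R S T) := by
  rw [injective_iff_map_eq_zero]
  intro ω hω
  obtain ⟨c, rfl⟩ := (Algebra.H1Cotangent.exact_δ_mapBaseChange R S T ω).mp hω
  rw [Subsingleton.elim c 0, map_zero]

theorem linearIndependent_D_algebraMap_X_of_formallySmooth (R A ι : Type*) [CommRing R] [CommRing A]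
    [Algebra R A] [Algebra (MvPolynomial ι R) A] [IsScalarTower R (MvPolynomial ι R) A]
    [Algebra.FormallySmooth (MvPolynomial ι R) A] :
    LinearIndependent A fun i ↦ D R A (algebraMap (MvPolynomial ι R) A (MvPolynomial.X i)) := by
  have hbasis := ((mvPolynomialBasis R ι).baseChange A).linearIndependent.map'
    (mapBaseChange R (MvPolynomial ι R) A)
    (LinearMap.ker_eq_bot.mpr (mapBaseChange_injective_of_formallySmooth _ _ _))
  simpa [Function.comp_def] using hbasis

theorem linearIndependent_D_of_algebraicIndependent {R K ι : Type*} [CommRing R] [Field K]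
    [Algebra R K] [CharZero K] {x : ι → K} (hx : AlgebraicIndependent R x) :
    LinearIndependent K fun i ↦ D R K (x i) := by
  let := (MvPolynomial.aeval (R := R) x).toAlgebra
  have : IsScalarTower R (MvPolynomial ι R) K :=
    .of_algebraMap_eq' (MvPolynomial.aeval x).comp_algebraMap.symm
  have : FaithfulSMul (MvPolynomial ι R) K := (faithfulSMul_iff_algebraMap_injective _ _).mpr hx
  have := formallySmooth_of_faithfulSMul_of_charZero (MvPolynomial ι R) K
  have hX (i : ι) : algebraMap (MvPolynomial ι R) K (MvPolynomial.X i) = x i :=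
    MvPolynomial.aeval_X x i
  simpa only [hX] using linearIndependent_D_algebraMap_X_of_formallySmooth R K ι

theorem isAlgebraic_iff_kaehler_d_eq_zero_general {R K : Type*} [CommRing R] [Field K]
    [Algebra R K] [FaithfulSMul R K] [CharZero K] (z : K) :
    IsAlgebraic R z ↔ D R K z = 0 := by
  refine ⟨derivation_eq_zero_of_isAlgebraic (D R K), fun hdz ↦ ?_⟩
  by_contra hz
  have hindep : AlgebraicIndependent R fun _ : Unit ↦ z :=
    algebraicIndependent_unique_type_iff.mpr hz
  exact (linearIndependent_D_of_algebraicIndependent hindep).ne_zero () hdz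

/-- In characteristic zero, for a finitely generated field extension `k ⊆ K` and
`z ∈ K`, the element `z` is algebraic over `k` iff its differential `dz`
vanishes in the `K`-vector space of Kähler differentials `Ω[K⁄k]`. -/
theorem isAlgebraic_iff_kaehler_d_eq_zero
    (k K : Type*) [Field k] [Field K] [Algebra k K] [CharZero k]
    (hfg : ∃ s : Finset K, IntermediateField.adjoin k (s : Set K) = ⊤)
    (z : K) :
    IsAlgebraic k z ↔ KaehlerDifferential.D k K z = 0 := by
  have : CharZero K := charZero_of_injective_algebraMap (algebraMap k K).injective
  exact isAlgebraic_iff_kaehler_d_eq_zero_general z
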